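/- Let B be a bialgebra over K with m = Ker ε, and consider the vertical differential δ_c^{p,q} : C^{p,q} → C^{p+1,q} given by δ_c^{p,q}(f) = (Id ⊗ f) ∘ σ^q + Σ_{j=1}^{p} (−1)^j Δ_j^p ∘ f + (−1)^{p+1} (f ⊗ Id) ∘ τ^q. If f ∈ C^{p,q} factors through m, then δ_c^{p,q}(f) also factors through m. -/

import Mathlib

open TensorProduct

namespace GBD

variable (K B : Type*) [Field K] [Ring B] [Bialgebra K B]

/-- The `n`-th tensor power `B^{⊗n}`. -/
abbrev T (n : ℕ) := PiTensorProduct K (fun _ : Fin n => B)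

/-- Splitting off the first tensor factor: `B^{⊗(n+1)} ≃ B ⊗ B^{⊗n}`. -/
noncomputable def split (n : ℕ) : T K B (n + 1) ≃ₗ[K] B ⊗[K] T K B n :=
  ((PiTensorProduct.reindex K (fun _ : Fin (n+1) => B)
      ((finCongr (Nat.add_comm 1 n)).symm.trans finSumFinEquiv.symm)).trans
    (PiTensorProduct.tmulEquiv K B).symm).trans
      (TensorProduct.congr (PiTensorProduct.subsingletonEquiv (0 : Fin 1))
        (LinearEquiv.refl K _))

/-- Splitting off the last tensor factor: `B^{⊗(n+1)} ≃ B^{⊗n} ⊗ B`. -/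
noncomputable def splitLast (n : ℕ) : T K B (n + 1) ≃ₗ[K] T K B n ⊗[K] B :=
  ((PiTensorProduct.reindex K (fun _ : Fin (n+1) => B) finSumFinEquiv.symm).trans
    (PiTensorProduct.tmulEquiv K B).symm).trans
      (TensorProduct.congr (LinearEquiv.refl K _)
        (PiTensorProduct.subsingletonEquiv (0 : Fin 1)))

/-- Iterated comultiplication `Δ^{(n)} : B → B^{⊗n}` (with `Δ^{(0)} = ε`, `Δ^{(1)} = Id`). -/
noncomputable def iterComul : (n : ℕ) → (B →ₗ[K] T K B n)
  | 0 => (PiTensorProduct.isEmptyEquiv (Fin 0)).symm.toLinearMap ∘ₗ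
      (Coalgebra.counit (R := K) (A := B))
  | (n + 1) => (split K B n).symm.toLinearMap ∘ₗ
      LinearMap.lTensor B (iterComul n) ∘ₗ (Coalgebra.comul (R := K) (A := B))

/-- Componentwise comultiplication `B^{⊗n} → B^{⊗n} ⊗ B^{⊗n}`,
`b¹⊗⋯⊗bⁿ ↦ (b¹₍₁₎⊗⋯⊗bⁿ₍₁₎) ⊗ (b¹₍₂₎⊗⋯⊗bⁿ₍₂₎)`. -/
noncomputable def comulT : (n : ℕ) → (T K B n →ₗ[K] T K B n ⊗[K] T K B n)
  | 0 => (TensorProduct.congr (PiTensorProduct.isEmptyEquiv (Fin 0)).symm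
        (PiTensorProduct.isEmptyEquiv (Fin 0)).symm).toLinearMap ∘ₗ
      (TensorProduct.lid K K).symm.toLinearMap ∘ₗ
        (PiTensorProduct.isEmptyEquiv (Fin 0)).toLinearMap
  | (n + 1) =>
      (TensorProduct.congr (split K B n).symm (split K B n).symm).toLinearMap ∘ₗ
        (TensorProduct.tensorTensorTensorComm K B B (T K B n) (T K B n)).toLinearMap ∘ₗ
          TensorProduct.map (Coalgebra.comul (R := K) (A := B)) (comulT n) ∘ₗ
            (split K B n).toLinearMap

/-- The product of all tensor factors, `B^{⊗n} → B`, `b¹⊗⋯⊗bⁿ ↦ b¹⋯bⁿ`. -/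
noncomputable def prodT (n : ℕ) : T K B n →ₗ[K] B :=
  PiTensorProduct.lift (MultilinearMap.mkPiAlgebraFin K n B)

/-- `μ_i : B^{⊗(q+1)} → B^{⊗q}` multiplying the `i`-th and `(i+1)`-th factors
(`i` is 0-indexed here). -/
noncomputable def mulAt : (q : ℕ) → ℕ → (T K B (q + 1) →ₗ[K] T K B q)
  | 0, _ => 0
  | (q + 1), 0 => (split K B q).symm.toLinearMap ∘ₗ
      LinearMap.rTensor (T K B q) (LinearMap.mul' K B) ∘ₗ
        (TensorProduct.assoc K B B (T K B q)).symm.toLinearMap ∘ₗ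
          LinearMap.lTensor B (split K B q).toLinearMap ∘ₗ
            (split K B (q + 1)).toLinearMap
  | (q + 1), (i + 1) => (split K B q).symm.toLinearMap ∘ₗ
      LinearMap.lTensor B (mulAt q i) ∘ₗ (split K B (q + 1)).toLinearMap

/-- `Δ_j : B^{⊗p} → B^{⊗(p+1)}` applying `Δ` to the `j`-th factor (`j` is 0-indexed). -/
noncomputable def comulAt : (p : ℕ) → ℕ → (T K B p →ₗ[K] T K B (p + 1))
  | 0, _ => 0
  | (p + 1), 0 => (split K B (p + 1)).symm.toLinearMap ∘ₗ
      LinearMap.lTensor B (split K B p).symm.toLinearMap ∘ₗ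
        (TensorProduct.assoc K B B (T K B p)).toLinearMap ∘ₗ
          LinearMap.rTensor (T K B p) (Coalgebra.comul (R := K) (A := B)) ∘ₗ
            (split K B p).toLinearMap
  | (p + 1), (i + 1) => (split K B (p + 1)).symm.toLinearMap ∘ₗ
      LinearMap.lTensor B (comulAt p i) ∘ₗ (split K B p).toLinearMap

/-- `λ^p : B^{⊗(p+1)} → B^{⊗p}`, `b¹⊗b²⊗⋯⊗b^{p+1} ↦ b¹₍₁₎b² ⊗ ⋯ ⊗ b¹₍ₚ₎b^{p+1}`. -/
noncomputable def lamMap (p : ℕ) : T K B (p + 1) →ₗ[K] T K B p :=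
  LinearMap.mul' K (T K B p) ∘ₗ TensorProduct.map (iterComul K B p) LinearMap.id ∘ₗ
    (split K B p).toLinearMap

/-- `ρ^p : B^{⊗(p+1)} → B^{⊗p}`, `b¹⊗⋯⊗b^p⊗b^{p+1} ↦ b¹b^{p+1}₍₁₎ ⊗ ⋯ ⊗ b^p b^{p+1}₍ₚ₎`. -/
noncomputable def rhoMap (p : ℕ) : T K B (p + 1) →ₗ[K] T K B p :=
  LinearMap.mul' K (T K B p) ∘ₗ TensorProduct.map LinearMap.id (iterComul K B p) ∘ₗ
    (splitLast K B p).toLinearMap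

/-- `σ^q : B^{⊗q} → B^{⊗(q+1)}`, `b¹⊗⋯⊗b^q ↦ (b¹₍₁₎⋯b^q₍₁₎) ⊗ b¹₍₂₎ ⊗ ⋯ ⊗ b^q₍₂₎`. -/
noncomputable def sigmaMap (q : ℕ) : T K B q →ₗ[K] T K B (q + 1) :=
  (split K B q).symm.toLinearMap ∘ₗ
    TensorProduct.map (prodT K B q) LinearMap.id ∘ₗ comulT K B q

/-- `τ^q : B^{⊗q} → B^{⊗(q+1)}`, `b¹⊗⋯⊗b^q ↦ b¹₍₁₎ ⊗ ⋯ ⊗ b^q₍₁₎ ⊗ (b¹₍₂₎⋯b^q₍₂₎)`. -/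
noncomputable def tauMap (q : ℕ) : T K B q →ₗ[K] T K B (q + 1) :=
  (splitLast K B q).symm.toLinearMap ∘ₗ
    TensorProduct.map LinearMap.id (prodT K B q) ∘ₗ comulT K B q

/-- The horizontal (Hochschild-type) differential
`δ_h^{p,q} : Hom(B^{⊗q}, B^{⊗p}) → Hom(B^{⊗(q+1)}, B^{⊗p})`. -/
noncomputable def deltaH (p q : ℕ) (f : T K B q →ₗ[K] T K B p) :
    T K B (q + 1) →ₗ[K] T K B p :=
  lamMap K B p ∘ₗ (split K B p).symm.toLinearMap ∘ₗ LinearMap.lTensor B f ∘ₗ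
      (split K B q).toLinearMap
    + ∑ i ∈ Finset.range q, ((-1 : ℤ) ^ (i + 1)) • (f ∘ₗ mulAt K B q i)
    + ((-1 : ℤ) ^ (q + 1)) •
        (rhoMap K B p ∘ₗ (splitLast K B p).symm.toLinearMap ∘ₗ LinearMap.rTensor B f ∘ₗ
          (splitLast K B q).toLinearMap)

/-- The vertical (coHochschild-type) differential
`δ_c^{p,q} : Hom(B^{⊗q}, B^{⊗p}) → Hom(B^{⊗q}, B^{⊗(p+1)})`. -/
noncomputable def deltaCv (p q : ℕ) (f : T K B q →ₗ[K] T K B p) :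
    T K B q →ₗ[K] T K B (p + 1) :=
  (split K B p).symm.toLinearMap ∘ₗ LinearMap.lTensor B f ∘ₗ (split K B q).toLinearMap ∘ₗ
      sigmaMap K B q
    + ∑ j ∈ Finset.range p, ((-1 : ℤ) ^ (j + 1)) • (comulAt K B p j ∘ₗ f)
    + ((-1 : ℤ) ^ (p + 1)) •
        ((splitLast K B p).symm.toLinearMap ∘ₗ LinearMap.rTensor B f ∘ₗ
          (splitLast K B q).toLinearMap ∘ₗ tauMap K B q)


/-- The augmentation ideal `m = ker ε`. -/
noncomputable def aug : Submodule K B := LinearMap.ker (Coalgebra.counit (R := K) (A := B))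

/-- The projection `π : B → m`, `π(b) = b − ε(b)·1`. -/
noncomputable def projAug : B →ₗ[K] aug K B :=
  LinearMap.codRestrict (aug K B)
    (LinearMap.id - Algebra.linearMap K B ∘ₗ Coalgebra.counit)
    (fun b => by simp [aug, LinearMap.mem_ker])

/-- `f : B^{⊗q} → B^{⊗p}` factors through the augmentation ideal, i.e. `f` lies in the
image of the embedding `D^{p,q} = Hom(m^{⊗q}, m^{⊗p}) ↪ C^{p,q}`,
`f' ↦ i^{⊗p} ∘ f' ∘ π^{⊗q}`. -/
def FactorsThroughAug (p q : ℕ) (f : T K B q →ₗ[K] T K B p) : Prop :=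
  ∃ f' : PiTensorProduct K (fun _ : Fin q => aug K B) →ₗ[K]
      PiTensorProduct K (fun _ : Fin p => aug K B),
    f = PiTensorProduct.map (fun _ : Fin p => (aug K B).subtype) ∘ₗ f' ∘ₗ
          PiTensorProduct.map (fun _ : Fin q => projAug K B)

/-!
Let `π = id − ηε`. Since `π` is an idempotent with image `m`, a map `f` factors through `m` iff
`f ∘ π^{⊗q} = f` and `π^{⊗p} ∘ f = f`. The first condition passes to `δ_c f` because
`(id ⊗ π) ∘ Δ ∘ π = (id ⊗ π) ∘ Δ` and `(π ⊗ id) ∘ Δ ∘ π = (π ⊗ id) ∘ Δ`, as `π` kills `1`.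
For the second one, let `s_j` denote insertion of `1` after the first `j` factors. From
`(π ⊗ π) Δ b = Δ b − b ⊗ 1 − 1 ⊗ b` for `b ∈ m`, applying `π^{⊗(p+1)}` to the summands of `δ_c f`
subtracts `s_0 f` from the first one, `s_{j-1} f + s_j f` from `Δ_j f`, and `s_p f` from the last
one. The alternating sum of these corrections telescopes to zero.
-/

variable {K B}

theorem split_tprod (n : ℕ) (v : Fin (n + 1) → B) :
    split K B n (PiTensorProduct.tprod K v) =
      v 0 ⊗ₜ PiTensorProduct.tprod K fun i => v i.succ := by
  have hsucc (i : Fin n) : Fin.cast (Nat.add_comm 1 n) (Fin.natAdd 1 i) = i.succ :=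
    Fin.ext (Nat.add_comm 1 i)
  simp only [split, finCongr_symm, LinearEquiv.trans_apply, PiTensorProduct.reindex_tprod,
    Equiv.symm_trans, Equiv.symm_symm, Equiv.trans_apply, finCongr_apply,
    PiTensorProduct.tmulEquiv_symm_apply, finSumFinEquiv_apply_left, finSumFinEquiv_apply_right,
    hsucc, TensorProduct.congr_tmul, PiTensorProduct.subsingletonEquiv_apply_tprod,
    LinearEquiv.refl_apply]
  rfl

theorem splitLast_tprod (n : ℕ) (v : Fin (n + 1) → B) :
    splitLast K B n (PiTensorProduct.tprod K v) =
      (PiTensorProduct.tprod K fun i => v i.castSucc) ⊗ₜ v (Fin.last n) := by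
  simp only [splitLast, LinearEquiv.trans_apply, PiTensorProduct.reindex_tprod, Equiv.symm_symm,
    PiTensorProduct.tmulEquiv_symm_apply, finSumFinEquiv_apply_left, finSumFinEquiv_apply_right,
    TensorProduct.congr_tmul, LinearEquiv.refl_apply, PiTensorProduct.subsingletonEquiv_apply_tprod]
  rfl

theorem map_comp_split_symm (g : B →ₗ[K] B) (n : ℕ) :
    PiTensorProduct.map (fun _ => g) ∘ₗ (split K B n).symm.toLinearMap =
      (split K B n).symm.toLinearMap ∘ₗ TensorProduct.map g (PiTensorProduct.map fun _ => g) := by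
  have hsplit : (split K B n).toLinearMap ∘ₗ PiTensorProduct.map (fun _ => g) =
      TensorProduct.map g (PiTensorProduct.map fun _ => g) ∘ₗ (split K B n).toLinearMap := by
    ext v
    simp [split_tprod]
  rw [LinearEquiv.eq_toLinearMap_symm_comp, ← LinearMap.comp_assoc, hsplit, LinearMap.comp_assoc,
    LinearEquiv.comp_symm, LinearMap.comp_id]

theorem map_split_symm (g : B →ₗ[K] B) (n : ℕ) (z : B ⊗[K] T K B n) :
    PiTensorProduct.map (fun _ => g) ((split K B n).symm z) =
      (split K B n).symm (TensorProduct.map g (PiTensorProduct.map fun _ => g) z) :=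
  LinearMap.congr_fun (map_comp_split_symm g n) z

theorem map_splitLast_symm (g : B →ₗ[K] B) (n : ℕ) (z : T K B n ⊗[K] B) :
    PiTensorProduct.map (fun _ => g) ((splitLast K B n).symm z) =
      (splitLast K B n).symm (TensorProduct.map (PiTensorProduct.map fun _ => g) g z) := by
  have hsplitLast : (splitLast K B n).toLinearMap ∘ₗ PiTensorProduct.map (fun _ => g) =
      TensorProduct.map (PiTensorProduct.map fun _ => g) g ∘ₗ
        (splitLast K B n).toLinearMap := by
    ext v
    simp [splitLast_tprod]
  rw [LinearEquiv.eq_symm_apply]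
  simpa using LinearMap.congr_fun hsplitLast ((splitLast K B n).symm z)

theorem prodT_split_symm_tmul (n : ℕ) (b : B) (y : T K B n) :
    prodT K B (n + 1) ((split K B n).symm (b ⊗ₜ y)) = b * prodT K B n y := by
  have hprod : prodT K B (n + 1) =
      LinearMap.mul' K B ∘ₗ LinearMap.lTensor B (prodT K B n) ∘ₗ (split K B n).toLinearMap := by
    ext v
    simp [split_tprod, prodT, List.ofFn_succ]
  simp [hprod]

theorem split_induction {n : ℕ} {C : T K B (n + 1) → Prop} (x : T K B (n + 1))
    (tmul : ∀ b y, C ((split K B n).symm (b ⊗ₜ y)))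
    (add : ∀ x y, C x → C y → C (x + y)) : C x := by
  obtain ⟨z, rfl⟩ := (split K B n).symm.surjective x
  induction z with
  | zero => simpa using tmul 0 0
  | tmul b y => exact tmul b y
  | add z w hz hw => rw [map_add]; exact add _ _ hz hw

variable (K B) in
/-- Insertion of the unit as a new tensor factor at the (0-indexed) place `j`. -/
noncomputable def insertOne {n : ℕ} (j : Fin (n + 1)) : T K B n →ₗ[K] T K B (n + 1) :=
  PiTensorProduct.lift <|
    (PiTensorProduct.tprod K (s := fun _ : Fin (n + 1) => B)).curryMid j 1

theorem insertOne_tprod {n : ℕ} (j : Fin (n + 1)) (v : Fin n → B) :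
    insertOne K B j (PiTensorProduct.tprod K v) =
      PiTensorProduct.tprod K (j.insertNth (α := fun _ => B) 1 v) := by
  simp [insertOne]

theorem insertOne_zero_apply {n : ℕ} (x : T K B n) :
    insertOne K B 0 x = (split K B n).symm (1 ⊗ₜ x) := by
  have hsplit : (split K B n).toLinearMap ∘ₗ insertOne K B 0 = TensorProduct.mk K B _ 1 := by
    ext v
    simp [insertOne_tprod, split_tprod]
  rw [LinearEquiv.eq_symm_apply]
  exact LinearMap.congr_fun hsplit x

theorem insertOne_last_apply {n : ℕ} (x : T K B n) :
    insertOne K B (Fin.last n) x = (splitLast K B n).symm (x ⊗ₜ 1) := by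
  have hsplitLast : (splitLast K B n).toLinearMap ∘ₗ insertOne K B (Fin.last n) =
      (TensorProduct.mk K _ B).flip 1 := by
    ext v
    simp [insertOne_tprod, splitLast_tprod]
  rw [LinearEquiv.eq_symm_apply]
  exact LinearMap.congr_fun hsplitLast x

theorem insertOne_succ_split_symm_tmul {n : ℕ} (j : Fin (n + 1)) (b : B) (y : T K B n) :
    insertOne K B j.succ ((split K B n).symm (b ⊗ₜ y)) =
      (split K B (n + 1)).symm (b ⊗ₜ insertOne K B j y) := by
  have hsplit : (split K B (n + 1)).toLinearMap ∘ₗ insertOne K B j.succ =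
      LinearMap.lTensor B (insertOne K B j) ∘ₗ (split K B n).toLinearMap := by
    ext v
    cases v using Fin.consCases
    simp [insertOne_tprod, split_tprod, Fin.insertNth_succ_cons]
  rw [LinearEquiv.eq_symm_apply]
  simpa using LinearMap.congr_fun hsplit ((split K B n).symm (b ⊗ₜ y))

theorem map_comulT_split_symm_tmul {n : ℕ} {M M' N N' P Q : Type*}
    [AddCommMonoid M] [AddCommMonoid M'] [AddCommMonoid N] [AddCommMonoid N']
    [AddCommMonoid P] [AddCommMonoid Q] [Module K M] [Module K M'] [Module K N] [Module K N']
    [Module K P] [Module K Q] {φ : T K B (n + 1) →ₗ[K] P} {ψ : T K B (n + 1) →ₗ[K] Q}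
    {Φ : M ⊗[K] M' →ₗ[K] P} {Ψ : N ⊗[K] N' →ₗ[K] Q}
    {g : B →ₗ[K] M} {g' : T K B n →ₗ[K] M'} {h : B →ₗ[K] N} {h' : T K B n →ₗ[K] N'}
    (hφ : φ ∘ₗ (split K B n).symm.toLinearMap = Φ ∘ₗ TensorProduct.map g g')
    (hψ : ψ ∘ₗ (split K B n).symm.toLinearMap = Ψ ∘ₗ TensorProduct.map h h')
    (b : B) (y : T K B n) :
    TensorProduct.map φ ψ (comulT K B (n + 1) ((split K B n).symm (b ⊗ₜ y))) =
      TensorProduct.map Φ Ψ (TensorProduct.tensorTensorTensorComm K M N M' N'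
        (TensorProduct.map g h (Coalgebra.comul b) ⊗ₜ
          TensorProduct.map g' h' (comulT K B n y))) := by
  have hcomm := LinearMap.congr_fun
    (TensorProduct.tensorTensorTensorComm_comp_map K g h g' h')
    (Coalgebra.comul b ⊗ₜ comulT K B n y)
  simp only [LinearMap.comp_apply, TensorProduct.map_tmul, LinearEquiv.coe_coe] at hcomm
  rw [hcomm]
  simp only [comulT, LinearMap.comp_apply, LinearEquiv.coe_coe, LinearEquiv.apply_symm_apply,
    TensorProduct.map_tmul, TensorProduct.toLinearMap_congr, TensorProduct.map_map, hφ, hψ]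

theorem map_map_comulT_map {g h k : B →ₗ[K] B}
    (hk : ∀ b, TensorProduct.map g h (Coalgebra.comul (k b)) =
      TensorProduct.map g h (Coalgebra.comul b)) {n : ℕ} (x : T K B n) :
    TensorProduct.map (PiTensorProduct.map fun _ => g) (PiTensorProduct.map fun _ => h)
        (comulT K B n (PiTensorProduct.map (fun _ => k) x)) =
      TensorProduct.map (PiTensorProduct.map fun _ => g) (PiTensorProduct.map fun _ => h)
        (comulT K B n x) := by
  induction n with
  | zero =>
    have hid : PiTensorProduct.map (fun _ : Fin 0 => k) = LinearMap.id := by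
      ext v
      simp [Subsingleton.elim (fun _ => _) v]
    rw [hid, LinearMap.id_apply]
  | succ n ih =>
    induction x using split_induction with
    | add x y hx hy => simp only [map_add, hx, hy]
    | tmul b y =>
      have hgh := map_comulT_split_symm_tmul (map_comp_split_symm g n) (map_comp_split_symm h n)
      rw [map_split_symm, TensorProduct.map_tmul, hgh, hgh, hk, ih]

variable (K B) in
/-- The counit `ε^{⊗n}` of the tensor power bialgebra `B^{⊗n}`, written as
`b¹⊗⋯⊗bⁿ ↦ ε(b¹⋯bⁿ)` by multiplicativity of `ε`. -/
noncomputable def counitT (n : ℕ) : T K B n →ₗ[K] K :=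
  Coalgebra.counit ∘ₗ prodT K B n

theorem counitT_comp_split_symm (n : ℕ) :
    counitT K B (n + 1) ∘ₗ (split K B n).symm.toLinearMap =
      LinearMap.mul' K K ∘ₗ TensorProduct.map Coalgebra.counit (counitT K B n) :=
  TensorProduct.ext' fun b y => by simp [counitT, prodT_split_symm_tmul]

theorem id_comp_split_symm (n : ℕ) : LinearMap.id ∘ₗ (split K B n).symm.toLinearMap =
    (split K B n).symm.toLinearMap ∘ₗ TensorProduct.map LinearMap.id LinearMap.id := by
  rw [TensorProduct.map_id, LinearMap.id_comp, LinearMap.comp_id]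

theorem rTensor_counitT_comulT {n : ℕ} (x : T K B n) :
    LinearMap.rTensor (T K B n) (counitT K B n) (comulT K B n x) = 1 ⊗ₜ x := by
  induction n with
  | zero =>
    obtain ⟨r, rfl⟩ := (PiTensorProduct.isEmptyEquiv (Fin 0)).symm.surjective x
    simp [comulT, counitT, prodT]
  | succ n ih =>
    induction x using split_induction with
    | add x y hx hy => simp only [map_add, TensorProduct.tmul_add, hx, hy]
    | tmul b y =>
      simp only [LinearMap.rTensor] at ih ⊢
      rw [map_comulT_split_symm_tmul (counitT_comp_split_symm n) (id_comp_split_symm n), ih,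
        ← LinearMap.rTensor, Coalgebra.rTensor_counit_comul]
      simp

theorem lTensor_counitT_comulT {n : ℕ} (x : T K B n) :
    LinearMap.lTensor (T K B n) (counitT K B n) (comulT K B n x) = x ⊗ₜ 1 := by
  induction n with
  | zero =>
    obtain ⟨r, rfl⟩ := (PiTensorProduct.isEmptyEquiv (Fin 0)).symm.surjective x
    simp [comulT, counitT, prodT, TensorProduct.smul_tmul']
  | succ n ih =>
    induction x using split_induction with
    | add x y hx hy => simp only [map_add, TensorProduct.add_tmul, hx, hy]
    | tmul b y =>
      simp only [LinearMap.lTensor] at ih ⊢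
      rw [map_comulT_split_symm_tmul (id_comp_split_symm n) (counitT_comp_split_symm n), ih,
        ← LinearMap.lTensor, Coalgebra.lTensor_counit_comul]
      simp

variable (K B) in
/-- The projection `π = id − ηε` onto the augmentation ideal, as an idempotent endomorphism
of `B`. -/
noncomputable def projEnd : B →ₗ[K] B :=
  (aug K B).subtype ∘ₗ projAug K B

theorem projEnd_eq_id_sub :
    projEnd K B = LinearMap.id - Algebra.linearMap K B ∘ₗ Coalgebra.counit :=
  rfl

theorem projAug_comp_subtype : projAug K B ∘ₗ (aug K B).subtype = LinearMap.id := by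
  ext b
  have hb : Coalgebra.counit (R := K) (b : B) = 0 := b.2
  change (b : B) - algebraMap K B (Coalgebra.counit (b : B)) = b
  rw [hb, map_zero, sub_zero]

theorem projEnd_comp_projEnd : projEnd K B ∘ₗ projEnd K B = projEnd K B := by
  simp only [projEnd, LinearMap.comp_assoc, ← LinearMap.comp_assoc (projAug K B),
    projAug_comp_subtype, LinearMap.id_comp]

theorem projEnd_projEnd (b : B) : projEnd K B (projEnd K B b) = projEnd K B b :=
  LinearMap.congr_fun projEnd_comp_projEnd b

theorem projEnd_one : projEnd K B 1 = 0 := by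
  simp [projEnd_eq_id_sub]

theorem comul_projEnd (b : B) : Coalgebra.comul (R := K) (projEnd K B b) =
    Coalgebra.comul (R := K) b - Coalgebra.counit (R := K) b • (1 ⊗ₜ[K] 1) := by
  simp [projEnd_eq_id_sub, Algebra.algebraMap_eq_smul_one, Algebra.TensorProduct.one_def]

theorem lTensor_projEnd_comul_projEnd (b : B) :
    LinearMap.lTensor B (projEnd K B) (Coalgebra.comul (projEnd K B b)) =
      LinearMap.lTensor B (projEnd K B) (Coalgebra.comul b) := by
  simp [comul_projEnd, projEnd_one]

theorem rTensor_projEnd_comul_projEnd (b : B) :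
    LinearMap.rTensor B (projEnd K B) (Coalgebra.comul (projEnd K B b)) =
      LinearMap.rTensor B (projEnd K B) (Coalgebra.comul b) := by
  simp [comul_projEnd, projEnd_one]

theorem lTensor_projEnd_comul (b : B) :
    LinearMap.lTensor B (projEnd K B) (Coalgebra.comul b) = Coalgebra.comul b - b ⊗ₜ 1 := by
  simp [projEnd_eq_id_sub, LinearMap.lTensor_sub, LinearMap.lTensor_comp]

theorem rTensor_projEnd_comul (b : B) :
    LinearMap.rTensor B (projEnd K B) (Coalgebra.comul b) = Coalgebra.comul b - 1 ⊗ₜ b := by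
  simp [projEnd_eq_id_sub, LinearMap.rTensor_sub, LinearMap.rTensor_comp]

theorem map_projEnd_comul_projEnd (b : B) :
    TensorProduct.map (projEnd K B) (projEnd K B) (Coalgebra.comul (projEnd K B b)) =
      Coalgebra.comul (projEnd K B b) - projEnd K B b ⊗ₜ 1 - 1 ⊗ₜ projEnd K B b := by
  rw [← LinearMap.lTensor_comp_rTensor, LinearMap.comp_apply, rTensor_projEnd_comul, map_sub,
    lTensor_projEnd_comul, LinearMap.lTensor_tmul, projEnd_projEnd]

variable (K B) in
/-- The idempotent `π^{⊗n}` of `B^{⊗n}`. -/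
noncomputable abbrev projT (n : ℕ) : T K B n →ₗ[K] T K B n :=
  PiTensorProduct.map fun _ => projEnd K B

theorem projT_comp_projT (n : ℕ) : projT K B n ∘ₗ projT K B n = projT K B n := by
  simp only [← PiTensorProduct.map_comp, projEnd_comp_projEnd]

theorem factorsThroughAug_iff {p q : ℕ} (f : T K B q →ₗ[K] T K B p) :
    FactorsThroughAug K B p q f ↔ f ∘ₗ projT K B q = f ∧ projT K B p ∘ₗ f = f := by
  have hproj (n : ℕ) : projT K B n = PiTensorProduct.map (fun _ => (aug K B).subtype) ∘ₗ
      PiTensorProduct.map (fun _ => projAug K B) :=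
    PiTensorProduct.map_comp _ _
  have hretract (n : ℕ) : PiTensorProduct.map (fun _ : Fin n => projAug K B) ∘ₗ
      PiTensorProduct.map (fun _ => (aug K B).subtype) = LinearMap.id := by
    rw [← PiTensorProduct.map_comp]
    simp only [projAug_comp_subtype, PiTensorProduct.map_id]
  constructor
  · rintro ⟨f', rfl⟩
    have hretract' (n : ℕ) (x : PiTensorProduct K fun _ : Fin n => aug K B) :=
      LinearMap.congr_fun (hretract n) x
    simp only [LinearMap.comp_apply, LinearMap.id_apply] at hretract'
    constructor <;> ext v <;>
      simp only [hproj, hretract', LinearMap.compMultilinearMap_apply, LinearMap.comp_apply]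
  · rintro ⟨hsource, htarget⟩
    refine ⟨PiTensorProduct.map (fun _ => projAug K B) ∘ₗ f ∘ₗ
      PiTensorProduct.map (fun _ => (aug K B).subtype), ?_⟩
    have hconj : f = projT K B p ∘ₗ f ∘ₗ projT K B q := by rw [hsource, htarget]
    simpa only [hproj, LinearMap.comp_assoc] using hconj

theorem map_split_symm_lTensor_assoc (g : B →ₗ[K] B) {n : ℕ} (z : B ⊗[K] B) (y : T K B n) :
    PiTensorProduct.map (fun _ => g) ((split K B (n + 1)).symm
        (LinearMap.lTensor B (split K B n).symm.toLinearMap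
          (TensorProduct.assoc K B B (T K B n) (z ⊗ₜ y)))) =
      (split K B (n + 1)).symm
        (LinearMap.lTensor B (split K B n).symm.toLinearMap
          (TensorProduct.assoc K B B (T K B n)
            (TensorProduct.map g g z ⊗ₜ PiTensorProduct.map (fun _ => g) y))) := by
  induction z with
  | zero => simp
  | tmul b c => simp [map_split_symm]
  | add z w hz hw => simp only [TensorProduct.add_tmul, map_add, hz, hw]

theorem projT_comulAt_projT {p : ℕ} (j : Fin p) (x : T K B p) :
    projT K B (p + 1) (comulAt K B p j (projT K B p x)) =
      comulAt K B p j (projT K B p x) - insertOne K B j.castSucc (projT K B p x) -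
        insertOne K B j.succ (projT K B p x) := by
  induction p with
  | zero => exact j.elim0
  | succ p ih =>
    induction x using split_induction with
    | add x y hx hy => simp only [map_add, hx, hy]; abel
    | tmul b y =>
      have hidem : projT K B p (projT K B p y) = projT K B p y := by
        rw [← LinearMap.comp_apply, projT_comp_projT]
      rw [map_split_symm, TensorProduct.map_tmul]
      cases j using Fin.cases with
      | zero =>
        simp only [Fin.val_zero, comulAt, LinearMap.comp_apply, LinearEquiv.coe_coe,
          LinearEquiv.apply_symm_apply, LinearMap.rTensor_tmul, map_split_symm_lTensor_assoc]
        rw [map_projEnd_comul_projEnd, hidem]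
        simp only [Fin.castSucc_zero, insertOne_zero_apply,
          insertOne_succ_split_symm_tmul, TensorProduct.sub_tmul, map_sub,
          TensorProduct.assoc_tmul, LinearMap.lTensor_tmul, LinearEquiv.coe_coe]
        abel
      | succ j =>
        simp only [Fin.val_succ, comulAt, LinearMap.comp_apply, LinearEquiv.coe_coe,
          LinearEquiv.apply_symm_apply, LinearMap.lTensor_tmul, map_split_symm,
          TensorProduct.map_tmul, projEnd_projEnd, ih, ← Fin.succ_castSucc,
          insertOne_succ_split_symm_tmul, TensorProduct.tmul_sub, map_sub]

theorem sum_neg_one_pow_smul_castSucc_add_succ {M : Type*} [AddCommGroup M] {p : ℕ}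
    (a : Fin (p + 1) → M) :
    ∑ j : Fin p, (-1 : ℤ) ^ (j + 1 : ℕ) • (a j.castSucc + a j.succ) =
      -a 0 - (-1 : ℤ) ^ (p + 1) • a (Fin.last p) := by
  induction p with
  | zero => simp
  | succ p ih =>
    have hinit := ih fun i => a i.castSucc
    simp only [Fin.castSucc_zero] at hinit
    rw [Fin.sum_univ_castSucc]
    simp only [Fin.val_castSucc, Fin.succ_castSucc, hinit, Fin.val_last, Fin.succ_last]
    module

theorem deltaCv_apply {p q : ℕ} (f : T K B q →ₗ[K] T K B p) (x : T K B q) :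
    deltaCv K B p q f x =
      (split K B p).symm (TensorProduct.map (prodT K B q) f (comulT K B q x)) +
        ∑ j : Fin p, (-1 : ℤ) ^ (j + 1 : ℕ) • comulAt K B p j (f x) +
      (-1 : ℤ) ^ (p + 1) •
        (splitLast K B p).symm (TensorProduct.map f (prodT K B q) (comulT K B q x)) := by
  have hsigma : LinearMap.lTensor B f ∘ₗ (split K B q).toLinearMap ∘ₗ sigmaMap K B q =
      TensorProduct.map (prodT K B q) f ∘ₗ comulT K B q := by
    rw [sigmaMap, ← LinearMap.comp_assoc _ _ (split K B q).toLinearMap, LinearEquiv.comp_symm,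
      LinearMap.id_comp, ← LinearMap.comp_assoc, LinearMap.lTensor_comp_map, LinearMap.comp_id]
  have htau : LinearMap.rTensor B f ∘ₗ (splitLast K B q).toLinearMap ∘ₗ tauMap K B q =
      TensorProduct.map f (prodT K B q) ∘ₗ comulT K B q := by
    rw [tauMap, ← LinearMap.comp_assoc _ _ (splitLast K B q).toLinearMap, LinearEquiv.comp_symm,
      LinearMap.id_comp, ← LinearMap.comp_assoc, LinearMap.rTensor_comp_map, LinearMap.comp_id]
  have zsmul_apply (n : ℤ) (g : T K B q →ₗ[K] T K B (p + 1)) : (n • g) x = n • g x := rfl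
  simp only [deltaCv, hsigma, htau, Finset.sum_range, LinearMap.add_apply, LinearMap.sum_apply,
    zsmul_apply, LinearMap.comp_apply, LinearEquiv.coe_coe]

theorem projEnd_comp_prodT (n : ℕ) :
    projEnd K B ∘ₗ prodT K B n = prodT K B n - Algebra.linearMap K B ∘ₗ counitT K B n :=
  rfl

theorem rTensor_projEnd_comp_prodT_comulT {n : ℕ} (x : T K B n) :
    LinearMap.rTensor (T K B n) (projEnd K B ∘ₗ prodT K B n) (comulT K B n x) =
      LinearMap.rTensor (T K B n) (prodT K B n) (comulT K B n x) - 1 ⊗ₜ x := by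
  simp [projEnd_comp_prodT, LinearMap.rTensor_sub, LinearMap.rTensor_comp,
    rTensor_counitT_comulT]

theorem lTensor_projEnd_comp_prodT_comulT {n : ℕ} (x : T K B n) :
    LinearMap.lTensor (T K B n) (projEnd K B ∘ₗ prodT K B n) (comulT K B n x) =
      LinearMap.lTensor (T K B n) (prodT K B n) (comulT K B n x) - x ⊗ₜ 1 := by
  simp [projEnd_comp_prodT, LinearMap.lTensor_sub, LinearMap.lTensor_comp,
    lTensor_counitT_comulT]

theorem projT_split_symm_map_prodT_comulT {p q : ℕ} {f : T K B q →ₗ[K] T K B p}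
    (hf : projT K B p ∘ₗ f = f) (x : T K B q) :
    projT K B (p + 1) ((split K B p).symm (TensorProduct.map (prodT K B q) f (comulT K B q x))) =
      (split K B p).symm (TensorProduct.map (prodT K B q) f (comulT K B q x)) -
        insertOne K B 0 (f x) := by
  rw [map_split_symm, TensorProduct.map_map, hf, ← LinearMap.lTensor_comp_rTensor,
    LinearMap.comp_apply, rTensor_projEnd_comp_prodT_comulT, map_sub, map_sub,
    LinearMap.lTensor_tmul, ← insertOne_zero_apply, ← LinearMap.comp_apply,
    LinearMap.lTensor_comp_rTensor]

theorem projT_splitLast_symm_map_prodT_comulT {p q : ℕ} {f : T K B q →ₗ[K] T K B p}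
    (hf : projT K B p ∘ₗ f = f) (x : T K B q) :
    projT K B (p + 1)
        ((splitLast K B p).symm (TensorProduct.map f (prodT K B q) (comulT K B q x))) =
      (splitLast K B p).symm (TensorProduct.map f (prodT K B q) (comulT K B q x)) -
        insertOne K B (Fin.last p) (f x) := by
  rw [map_splitLast_symm, TensorProduct.map_map, hf, ← LinearMap.rTensor_comp_lTensor,
    LinearMap.comp_apply, lTensor_projEnd_comp_prodT_comulT, map_sub, map_sub,
    LinearMap.rTensor_tmul, ← insertOne_last_apply, ← LinearMap.comp_apply,
    LinearMap.rTensor_comp_lTensor]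

theorem lTensor_projT_comulT_projT {n : ℕ} (x : T K B n) :
    LinearMap.lTensor (T K B n) (projT K B n) (comulT K B n (projT K B n x)) =
      LinearMap.lTensor (T K B n) (projT K B n) (comulT K B n x) := by
  simpa only [PiTensorProduct.map_id, LinearMap.lTensor] using
    map_map_comulT_map (g := LinearMap.id) lTensor_projEnd_comul_projEnd x

theorem rTensor_projT_comulT_projT {n : ℕ} (x : T K B n) :
    LinearMap.rTensor (T K B n) (projT K B n) (comulT K B n (projT K B n x)) =
      LinearMap.rTensor (T K B n) (projT K B n) (comulT K B n x) := by
  simpa only [PiTensorProduct.map_id, LinearMap.rTensor] using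
    map_map_comulT_map (h := LinearMap.id) rTensor_projEnd_comul_projEnd x

theorem deltaCv_comp_projT {p q : ℕ} {f : T K B q →ₗ[K] T K B p} (hf : f ∘ₗ projT K B q = f) :
    deltaCv K B p q f ∘ₗ projT K B q = deltaCv K B p q f := by
  have hleft : TensorProduct.map (prodT K B q) f =
      TensorProduct.map (prodT K B q) f ∘ₗ LinearMap.lTensor _ (projT K B q) := by
    rw [LinearMap.map_comp_lTensor, hf]
  have hright : TensorProduct.map f (prodT K B q) =
      TensorProduct.map f (prodT K B q) ∘ₗ LinearMap.rTensor _ (projT K B q) := by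
    rw [LinearMap.map_comp_rTensor, hf]
  refine LinearMap.ext fun x => ?_
  have hfx : f (projT K B q x) = f x := LinearMap.congr_fun hf x
  rw [LinearMap.comp_apply, deltaCv_apply, deltaCv_apply, hfx, hleft, hright]
  simp only [LinearMap.comp_apply, lTensor_projT_comulT_projT, rTensor_projT_comulT_projT]

theorem projT_comp_deltaCv {p q : ℕ} {f : T K B q →ₗ[K] T K B p} (hf : projT K B p ∘ₗ f = f) :
    projT K B (p + 1) ∘ₗ deltaCv K B p q f = deltaCv K B p q f := by
  refine LinearMap.ext fun x => ?_
  have hfx : projT K B p (f x) = f x := LinearMap.congr_fun hf x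
  have hmid (j : Fin p) : projT K B (p + 1) (comulAt K B p j (f x)) =
      comulAt K B p j (f x) -
        (insertOne K B j.castSucc (f x) + insertOne K B j.succ (f x)) := by
    rw [← hfx, projT_comulAt_projT, sub_sub]
  have htele := sum_neg_one_pow_smul_castSucc_add_succ fun j => insertOne K B j (f x)
  simp only [LinearMap.comp_apply, deltaCv_apply, map_add, map_sum, map_zsmul,
    projT_split_symm_map_prodT_comulT hf, projT_splitLast_symm_map_prodT_comulT hf, hmid,
    zsmul_sub, Finset.sum_sub_distrib, htele]
  abel

variable (K B)

/-- If `f ∈ C^{p,q} = Hom(B^{⊗q}, B^{⊗p})` factors through the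
augmentation ideal `m = ker ε` (i.e. lies in the image of `D^{p,q} ↪ C^{p,q}`), then so
does its vertical differential `δ_c^{p,q}(f)`. -/
theorem deltaCv_factorsThroughAug (p q : ℕ) (hp : 1 ≤ p) (hq : 1 ≤ q)
    (f : T K B q →ₗ[K] T K B p) (hf : FactorsThroughAug K B p q f) :
    FactorsThroughAug K B (p + 1) q (deltaCv K B p q f) := by
  obtain ⟨hsource, htarget⟩ := (factorsThroughAug_iff f).1 hf
  exact (factorsThroughAug_iff _).2 ⟨deltaCv_comp_projT hsource, projT_comp_deltaCv htarget⟩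

end GBD
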